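/- Let q be a power of 2. Then GL_2(F_q) has exactly q−1 irreducible complex characters of degree q, and each such character ψ whose character field ℚ(ψ) is not contained in ℝ has unitary discriminant (−1)^{q/2}·(q+1). -/

import Mathlib

open Matrix

noncomputable section

namespace Paper

/-- The character of a matrix representation. -/
def charOf {G : Type} [Group G] {n : ℕ} (ρ : G →* GL (Fin n) ℂ) : G → ℂ :=
  fun g => Matrix.trace ((ρ g : Matrix (Fin n) (Fin n) ℂ))

/-- Irreducibility of a complex matrix representation. -/
def IsIrredRep {G : Type} [Group G] {n : ℕ} (ρ : G →* GL (Fin n) ℂ) : Prop :=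
  0 < n ∧ ∀ W : Submodule ℂ (Fin n → ℂ),
    (∀ (g : G), ∀ v ∈ W, (ρ g : Matrix (Fin n) (Fin n) ℂ).mulVec v ∈ W) → W = ⊥ ∨ W = ⊤

/-- `χ` is an irreducible complex character of `G`. -/
def IsIrrChar {G : Type} [Group G] (χ : G → ℂ) : Prop :=
  ∃ (n : ℕ) (ρ : G →* GL (Fin n) ℂ), IsIrredRep ρ ∧ χ = charOf ρ

/-- The character field `ℚ(χ)`, as a subfield of `ℂ`. -/
def charField {G : Type} [Group G] (χ : G → ℂ) : Subfield ℂ :=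
  Subfield.closure (Set.range χ)

/-- The subfield of real numbers inside `ℂ`. -/
def realsIn : Subfield ℂ := Subfield.closure (Set.range ((↑) : ℝ → ℂ))

/-- The character field of `χ` is not contained in `ℝ`. -/
def NotReal {G : Type} [Group G] (χ : G → ℂ) : Prop := ¬ charField χ ≤ realsIn

/-- `χ` has unitary discriminant `d`. -/
def HasUnitaryDisc {G : Type} [Group G] (χ : G → ℂ) (d : ℂ) : Prop :=
  ∀ (n : ℕ) (ρ : G →* GL (Fin n) ℂ),
    χ = charOf ρ →
    (∀ g i j, ((ρ g : Matrix (Fin n) (Fin n) ℂ)) i j ∈ charField χ) →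
    ∀ H : Matrix (Fin n) (Fin n) ℂ,
      (∀ i j, H i j ∈ charField χ) →
      IsUnit H.det →
      H.conjTranspose = H →
      (∀ g, ((ρ g : Matrix (Fin n) (Fin n) ℂ)).conjTranspose * H *
        (ρ g : Matrix (Fin n) (Fin n) ℂ) = H) →
      ∃ z ∈ charField χ, z ≠ 0 ∧
        (-1 : ℂ) ^ (n * (n - 1) / 2) * H.det = d * (z * (starRingEnd ℂ) z)

/-- `χ` has orthogonal discriminant `d`. -/
def HasOrthDisc {G : Type} [Group G] (χ : G → ℂ) (d : ℂ) : Prop :=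
  ∀ (n : ℕ) (ρ : G →* GL (Fin n) ℂ),
    χ = charOf ρ →
    (∀ g i j, ((ρ g : Matrix (Fin n) (Fin n) ℂ)) i j ∈ charField χ) →
    ∀ H : Matrix (Fin n) (Fin n) ℂ,
      (∀ i j, H i j ∈ charField χ) →
      IsUnit H.det →
      H.transpose = H →
      (∀ g, ((ρ g : Matrix (Fin n) (Fin n) ℂ)).transpose * H *
        (ρ g : Matrix (Fin n) (Fin n) ℂ) = H) →
      ∃ z ∈ charField χ, z ≠ 0 ∧
        (-1 : ℂ) ^ (n * (n - 1) / 2) * H.det = d * z ^ 2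

/-- `χ` is a rational character. -/
def IsRationalChar {G : Type} [Group G] (χ : G → ℂ) : Prop :=
  ∀ g, ∃ r : ℚ, χ g = (r : ℂ)

/-- `χ` is the character of a representation over `ℚ`. -/
def RealizableOverQ {G : Type} [Group G] (χ : G → ℂ) : Prop :=
  ∃ (n : ℕ) (ρ : G →* GL (Fin n) ℂ), χ = charOf ρ ∧
    ∀ g i j, ∃ r : ℚ, ((ρ g : Matrix (Fin n) (Fin n) ℂ)) i j = (r : ℂ)

end Paper

namespace StAux

open OnePoint Module

variable {F : Type} [Field F]

/-- upper unipotent element -/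
def up (x : F) : GL (Fin 2) F :=
  Matrix.GeneralLinearGroup.mkOfDetNeZero !![1, x; 0, 1] (by simp [Matrix.det_fin_two])

/-- the swap -/
def sw (F : Type) [Field F] : GL (Fin 2) F :=
  Matrix.GeneralLinearGroup.mkOfDetNeZero !![0, 1; 1, 0] (by simp [Matrix.det_fin_two])

/-- diagonal element -/
def dg (a d : Fˣ) : GL (Fin 2) F :=
  Matrix.GeneralLinearGroup.mkOfDetNeZero !![(a : F), 0; 0, (d : F)]
    (by simp [Matrix.det_fin_two])

lemma up_coe (x : F) : (up x : Matrix (Fin 2) (Fin 2) F) = !![1, x; 0, 1] := rfl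
lemma sw_coe : (sw F : Matrix (Fin 2) (Fin 2) F) = !![0, 1; 1, 0] := rfl
lemma dg_coe (a d : Fˣ) : (dg a d : Matrix (Fin 2) (Fin 2) F) = !![(a : F), 0; 0, (d : F)] := rfl

lemma up_add (x y : F) : up (x + y) = up x * up y := by
  apply Units.ext
  simp [up_coe, add_comm]

lemma up_zero : up (0 : F) = 1 := by
  apply Units.ext
  simp [up_coe, Matrix.one_fin_two]

lemma sw_sq : sw F * sw F = 1 := by
  apply Units.ext
  simp [sw_coe, Matrix.one_fin_two]

lemma dg_mul (a d a' d' : Fˣ) : dg a d * dg a' d' = dg (a * a') (d * d') := by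
  apply Units.ext
  simp [dg_coe]

lemma dg_up (a d : Fˣ) (x : F) : dg a d * up x = up (a * x * (d : F)⁻¹) * dg a d := by
  apply Units.ext
  simp [dg_coe, up_coe]

lemma dg_sw (a d : Fˣ) : dg a d * sw F = sw F * dg d a := by
  apply Units.ext
  simp [dg_coe, sw_coe]

lemma dg_det (a d : Fˣ) : Matrix.GeneralLinearGroup.det (dg a d) = a * d := by
  ext; simp [dg_coe, Matrix.det_fin_two]
lemma up_det (x : F) : Matrix.GeneralLinearGroup.det (up x) = 1 := by
  ext; simp [up_coe, Matrix.det_fin_two]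

lemma sw_up_sw_up (h2 : (2 : F) = 0) : up (1 : F) * (sw F * up 1 * sw F) * up 1 = sw F := by
  apply Units.ext
  have : (1 : F) + 1 = 0 := by rw [one_add_one_eq_two, h2]
  simp [up_coe, sw_coe, this]

lemma sw_up_sw (x : Fˣ) :
    sw F * (up (x : F) * sw F) = up ((x : F)⁻¹) * sw F * (up (-(x : F)) * dg x (-x⁻¹)) := by
  apply Units.ext
  simp [up_coe, sw_coe, dg_coe]

/-- Borel elements -/
lemma borel_form (g : GL (Fin 2) F) (h : g 1 0 = 0) :
    ∃ (x : F) (a d : Fˣ), g = up x * dg a d := by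
  have hd := g.det_ne_zero
  rw [Matrix.det_fin_two, h] at hd
  have h0 : g 0 0 ≠ 0 := by intro h; simp [h] at hd
  have h1 : g 1 1 ≠ 0 := by intro h; simp [h] at hd
  refine ⟨g 0 1 / g 1 1, Units.mk0 _ h0, Units.mk0 _ h1, ?_⟩
  apply Units.ext
  ext i j
  fin_cases i <;> fin_cases j <;> simp [up_coe, dg_coe, h, h1]

lemma bruhat (g : GL (Fin 2) F) (h : g 1 0 ≠ 0) :
    ∃ b : GL (Fin 2) F, b 1 0 = 0 ∧ g = up (g 0 0 / g 1 0) * sw F * b := by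
  refine ⟨(up (g 0 0 / g 1 0) * sw F)⁻¹ * g, ?_, by group⟩
  have : (up (g 0 0 / g 1 0) * sw F)⁻¹ = sw F * up (-(g 0 0 / g 1 0)) := by
    rw [inv_eq_iff_mul_eq_one]
    rw [mul_assoc, ← mul_assoc (sw F), sw_sq, one_mul, ← up_add]
    simp [up_zero]
  rw [this]
  simp [up_coe, sw_coe, Matrix.mul_apply, Fin.sum_univ_two, Matrix.of_apply]
  field_simp
  simp

lemma gl_induction (P : GL (Fin 2) F → Prop) (hu : ∀ x, P (up x)) (hd : ∀ a d, P (dg a d))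
    (hw : P (sw F)) (hm : ∀ g h, P g → P h → P (g * h)) (g : GL (Fin 2) F) : P g := by
  have hB : ∀ g : GL (Fin 2) F, g 1 0 = 0 → P g := by
    intro g hg
    obtain ⟨x, a, d, rfl⟩ := borel_form g hg
    exact hm _ _ (hu _) (hd _ _)
  by_cases h : g 1 0 = 0
  · exact hB g h
  · obtain ⟨b, hb, hg⟩ := bruhat g h
    rw [hg]
    exact hm _ _ (hm _ _ (hu _) hw) (hB b hb)

section action
variable [DecidableEq F]

lemma up_smul (x y : F) : up x • (y : OnePoint F) = ((y + x : F) : OnePoint F) := by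
  rw [OnePoint.smul_some_eq_ite]
  simp [up_coe]

lemma up_smul_infty (x : F) : up x • (∞ : OnePoint F) = ∞ := by
  rw [OnePoint.smul_infty_eq_self_iff]
  simp [up_coe]

/-- coset representatives -/
def rp (p : OnePoint F) : GL (Fin 2) F := p.elim 1 (fun x => up x * sw F)

lemma rp_smul (p : OnePoint F) : rp p • (∞ : OnePoint F) = p := by
  cases p with
  | infty => simp [rp]
  | coe x =>
    change (up x * sw F) • (∞ : OnePoint F) = x
    rw [OnePoint.smul_infty_eq_ite]
    simp [up_coe, sw_coe, Matrix.mul_apply, Fin.sum_univ_two]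

lemma sum_onePoint [Fintype F] {M : Type*} [AddCommMonoid M] (f : OnePoint F → M) :
    ∑ p, f p = f ∞ + ∑ x : F, f (x : OnePoint F) := Fintype.sum_option f

end action

end StAux

namespace StAux

open OnePoint Module

variable {F : Type} [Field F]
variable {V : Type} [AddCommGroup V] [Module ℂ V]

/-- Irreducibility (or zero) of a representation. -/
def Irr {G : Type} [Group G] (R : Representation ℂ G V) : Prop :=
  ∀ W : Submodule ℂ V, (∀ g, ∀ v ∈ W, R g v ∈ W) → W = ⊥ ∨ W = ⊤

/-- Twist by a character of the determinant. -/
def tw (l : Fˣ →* ℂˣ) (R : Representation ℂ (GL (Fin 2) F) V) :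
    Representation ℂ (GL (Fin 2) F) V where
  toFun g := ((l (Matrix.GeneralLinearGroup.det g) : ℂˣ) : ℂ) • R g
  map_one' := by simp
  map_mul' g h := by simp [smul_smul, mul_comm]

lemma tw_apply (l : Fˣ →* ℂˣ) (R : Representation ℂ (GL (Fin 2) F) V) (g : GL (Fin 2) F) (v : V) :
    tw l R g v = ((l (Matrix.GeneralLinearGroup.det g) : ℂˣ) : ℂ) • R g v := rfl

lemma Irr.tw {R : Representation ℂ (GL (Fin 2) F) V} (h : Irr R) (l : Fˣ →* ℂˣ) :
    Irr (tw l R) := by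
  intro W hW
  refine h W fun g v hv => ?_
  have := hW g v hv
  rw [tw_apply] at this
  exact (W.smul_mem_iff (Units.ne_zero _)).1 this

variable [Fintype F] [DecidableEq F]

instance instDecOnePoint : DecidableEq (OnePoint F) := inferInstanceAs (DecidableEq (Option F))

lemma keyK (R : Representation ℂ (GL (Fin 2) F) V) (w : OnePoint F → V)
    (hw : ∀ g p, R g (w p) = w (g • p)) (hs : ∑ p, w p = 0)
    (W : Submodule ℂ V) (hW : ∀ g, ∀ v ∈ W, R g v ∈ W)
    (c : OnePoint F → ℂ) (hc : ∑ p, c p • w p ∈ W) (y : OnePoint F) :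
    (((Fintype.card F : ℂ) + 1) * c y - ∑ p, c p) • w y ∈ W := by
  have base : ∀ c : OnePoint F → ℂ, ∑ p, c p • w p ∈ W →
      (((Fintype.card F : ℂ) + 1) * c ∞ - ∑ p, c p) • w ∞ ∈ W := by
    intro c hc
    have h1 : ∑ u : F, R (up u) (∑ p, c p • w p) ∈ W := W.sum_mem fun u _ => hW _ _ hc
    have h2 : ∑ u : F, R (up u) (∑ p, c p • w p) =
        (((Fintype.card F : ℂ) + 1) * c ∞ - ∑ p, c p) • w ∞ := by
      simp only [map_sum, _root_.map_smul, hw]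
      rw [Finset.sum_comm, sum_onePoint]
      have h3 : ∀ x : F, ∑ u : F, c x • w (up u • (x : OnePoint F)) = - c x • w ∞ := by
        intro x
        rw [← Finset.smul_sum]
        simp only [up_smul]
        rw [Fintype.sum_equiv (Equiv.addLeft x) (fun u => w ((x + u : F) : OnePoint F))
          (fun u => w (u : OnePoint F)) (fun u => rfl)]
        rw [sum_onePoint] at hs
        rw [eq_neg_of_add_eq_zero_right hs]
        simp
      simp only [h3, up_smul_infty]
      rw [← Finset.sum_smul, ← Finset.sum_smul, sum_onePoint c, ← add_smul,
        Finset.sum_neg_distrib]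
      congr 1
      simp
      ring
    rwa [h2] at h1
  have hg := rp_smul y
  set g := rp y
  have h1 := hW g⁻¹ _ hc
  simp only [map_sum, _root_.map_smul, hw] at h1
  rw [Fintype.sum_equiv (MulAction.toPerm g⁻¹) (fun p => c p • w (g⁻¹ • p))
    (fun p => c (g • p) • w p) (fun p => by simp)] at h1
  have h2 := hW g _ (base _ h1)
  rw [_root_.map_smul, hw, hg] at h2
  convert h2 using 3
  exact (Equiv.sum_comp (MulAction.toPerm g) c).symm

lemma orbit_w (R : Representation ℂ (GL (Fin 2) F) V) (v : V)
    (hv : ∀ b : GL (Fin 2) F, b 1 0 = 0 → R b v = v) (g : GL (Fin 2) F) (p : OnePoint F) :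
    R g (R (rp p) v) = R (rp (g • p)) v := by
  have h : ((rp (g • p))⁻¹ * (g * rp p)) 1 0 = 0 := by
    rw [← OnePoint.smul_infty_eq_self_iff, mul_smul, mul_smul, rp_smul, inv_smul_eq_iff, rp_smul]
  have h2 := hv _ h
  rw [map_mul, map_mul, Module.End.mul_apply, Module.End.mul_apply] at h2
  conv_rhs => rw [← h2]
  rw [← Module.End.mul_apply, ← map_mul]
  simp

lemma linInd_w (R : Representation ℂ (GL (Fin 2) F) V) (w : OnePoint F → V)
    (hw : ∀ g p, R g (w p) = w (g • p)) (hs : ∑ p, w p = 0) (h0 : w ∞ ≠ 0) :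
    LinearIndependent ℂ (fun x : F => w (x : OnePoint F)) := by
  rw [Fintype.linearIndependent_iff]
  intro c hc
  have hne : ∀ p, w p ≠ 0 := by
    intro p hp
    apply h0
    have := hw (rp p)⁻¹ p
    rw [hp, map_zero] at this
    rw [this, inv_smul_eq_iff.2 (rp_smul p).symm]
  let c' : OnePoint F → ℂ := fun p => p.elim 0 c
  have h1 : ∑ p, c' p • w p ∈ (⊥ : Submodule ℂ V) := by
    rw [sum_onePoint]
    simpa [c'] using hc
  have h2 := fun y => keyK R w hw hs ⊥ (by simp) c' h1 y
  simp only [Submodule.mem_bot, smul_eq_zero, hne, or_false] at h2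
  have h3 := h2 ∞
  have hq : ((Fintype.card F : ℂ) + 1) ≠ 0 := Nat.cast_add_one_ne_zero _
  intro x
  have h4 := h2 x
  simp only [c', OnePoint.elim_infty, mul_zero, zero_sub, neg_eq_zero] at h3
  simp only [c', h3, sub_zero, mul_eq_zero, hq, false_or] at h4
  exact h4

/-- The Steinberg matrix. -/
def stM (g : GL (Fin 2) F) : Matrix F F ℂ := fun x y =>
  (if g • (y : OnePoint F) = (x : OnePoint F) then 1 else 0) -
  (if g • (y : OnePoint F) = ∞ then 1 else 0)

lemma w_expand (w : OnePoint F → V) (hs : ∑ p, w p = 0) (p : OnePoint F) :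
    w p = ∑ x : F, (((if p = (x : OnePoint F) then 1 else 0) - (if p = ∞ then 1 else 0) : ℂ)) •
      w (x : OnePoint F) := by
  rw [sum_onePoint] at hs
  cases p with
  | infty => simp [eq_neg_of_add_eq_zero_left hs]
  | coe y => simp

lemma stM_act (R : Representation ℂ (GL (Fin 2) F) V) (w : OnePoint F → V)
    (hw : ∀ g p, R g (w p) = w (g • p)) (hs : ∑ p, w p = 0) (g : GL (Fin 2) F) (y : F) :
    R g (w (y : OnePoint F)) = ∑ x : F, stM g x y • w (x : OnePoint F) := by
  rw [hw, w_expand w hs (g • (y : OnePoint F))]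
  rfl

/-- trace of any rep with such a system is that of the Steinberg matrix -/
lemma trace_eq_stM [Module.Finite ℂ V] (R : Representation ℂ (GL (Fin 2) F) V)
    (w : OnePoint F → V)
    (hw : ∀ g p, R g (w p) = w (g • p)) (hs : ∑ p, w p = 0) (h0 : w ∞ ≠ 0)
    (hd : finrank ℂ V = Fintype.card F) (g : GL (Fin 2) F) :
    LinearMap.trace ℂ V (R g) = (stM g).trace := by
  let b := basisOfLinearIndependentOfCardEqFinrank (linInd_w R w hw hs h0) hd.symm
  have hb : ∀ x, b x = w (x : OnePoint F) := fun x => by simp [b]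
  have : R g = Matrix.toLin b b (stM g) := by
    apply b.ext
    intro y
    rw [Matrix.toLin_self, hb, stM_act R w hw hs]
    simp [hb]
  rw [this, Matrix.trace_toLin_eq]

/-- The Steinberg representation. -/
def stW : OnePoint F → (F → ℂ) := fun p x =>
  (if p = (x : OnePoint F) then 1 else 0) - (if p = ∞ then 1 else 0)

lemma stW_sum : ∑ p : OnePoint F, stW p = (0 : F → ℂ) := by
  ext x
  rw [Finset.sum_apply]
  simp [stW]

lemma stM_stW (g : GL (Fin 2) F) (p : OnePoint F) : (stM g).mulVec (stW p) = stW (g • p) := by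
  have key : ∀ y : F, (stM g).mulVec (stW (y : OnePoint F)) = stW (g • (y : OnePoint F)) := by
    intro y
    ext x
    simp [Matrix.mulVec, dotProduct, stW, stM]
  cases p with
  | coe y => exact key y
  | infty =>
    have h1 : stW (∞ : OnePoint F) = - ∑ x : F, stW (x : OnePoint F) := by
      have := stW_sum (F := F)
      rw [sum_onePoint] at this
      exact eq_neg_of_add_eq_zero_left this
    have h2 : ∑ p : OnePoint F, stW (g • p) = (0 : F → ℂ) := by
      rw [← stW_sum (F := F)]
      exact Equiv.sum_comp (MulAction.toPerm g) (fun p => stW (F := F) p)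
    rw [sum_onePoint] at h2
    rw [h1, Matrix.mulVec_neg, Matrix.mulVec_sum, eq_neg_of_add_eq_zero_left h2]
    simp only [key]

lemma stW_coe (x : F) : stW (x : OnePoint F) = Pi.single x (1 : ℂ) := by
  ext y
  simp [stW, Pi.single_apply, eq_comm]

lemma stM_mul (g h : GL (Fin 2) F) : stM (g * h) = stM g * stM h := by
  apply Matrix.ext_of_mulVec_single
  intro x
  rw [← stW_coe, ← Matrix.mulVec_mulVec, stM_stW, stM_stW, stM_stW, mul_smul]

lemma stM_one : stM (1 : GL (Fin 2) F) = 1 := by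
  apply Matrix.ext_of_mulVec_single
  intro x
  rw [← stW_coe, stM_stW, one_smul, Matrix.one_mulVec]

lemma stM_scalar (a : Fˣ) : stM (dg a a) = 1 := by
  apply Matrix.ext_of_mulVec_single
  intro x
  rw [← stW_coe, stM_stW, Matrix.one_mulVec, OnePoint.smul_some_eq_ite]
  simp [dg_coe]

/-- Steinberg as a representation -/
def stR (F : Type) [Field F] [Fintype F] [DecidableEq F] :
    Representation ℂ (GL (Fin 2) F) (F → ℂ) where
  toFun g := Matrix.toLin' (stM g)
  map_one' := by simp [stM_one]; rfl
  map_mul' g h := by rw [stM_mul, Matrix.toLin'_mul]; rfl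

lemma stR_irr : Irr (stR F) := by
  intro W hW
  by_cases h : ∃ p : OnePoint F, stW p ∈ W
  · right
    obtain ⟨p, hp⟩ := h
    have hall : ∀ p', stW p' ∈ W := by
      intro p'
      have := hW (rp p' * (rp p)⁻¹) _ hp
      change (stM _).mulVec _ ∈ W at this
      rwa [stM_stW, mul_smul, inv_smul_eq_iff.2 (rp_smul p).symm, rp_smul] at this
    rw [eq_top_iff]
    intro f _
    rw [pi_eq_sum_univ f]
    refine W.sum_mem fun x _ => W.smul_mem _ ?_
    convert hall (x : OnePoint F) using 1
    rw [stW_coe]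
    ext y
    simp [Pi.single_apply, eq_comm]
  · left
    rw [eq_bot_iff]
    intro f hf
    push Not at h
    let c' : OnePoint F → ℂ := fun p => p.elim 0 f
    have h1 : ∑ p, c' p • stW p ∈ W := by
      rw [sum_onePoint]
      convert hf
      simp only [stW_coe]
      ext x
      simp [c', Finset.sum_apply, Pi.single_apply]
    have h2 := fun y => keyK (stR F) stW (fun g p => stM_stW g p) stW_sum W hW c' h1 y
    have h2' : ∀ y, ((Fintype.card F : ℂ) + 1) * c' y - ∑ p, c' p = 0 := by
      intro y
      by_contra hne
      exact h y ((W.smul_mem_iff hne).1 (h2 y))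
    have h3 := h2' ∞
    have hq : ((Fintype.card F : ℂ) + 1) ≠ 0 := Nat.cast_add_one_ne_zero _
    rw [Submodule.mem_bot]
    ext x
    have h4 := h2' x
    simp only [c', OnePoint.elim_infty, mul_zero, zero_sub, neg_eq_zero] at h3
    simp only [c', h3, sub_zero, mul_eq_zero, hq, false_or] at h4
    exact h4

end StAux

namespace StAux

open OnePoint Module

variable {V : Type} [AddCommGroup V] [Module ℂ V] [Module.Finite ℂ V]

lemma inv_trace {S : Type} [Group S] [Fintype S] (R : Representation ℂ S V) :
    (finrank ℂ R.invariants : ℂ) * Fintype.card S = ∑ s, LinearMap.trace ℂ V (R s) := by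
  have hne : (Fintype.card S : ℂ) ≠ 0 := by simp
  let _ : Invertible (Fintype.card S : ℂ) := invertibleOfNonzero hne
  rw [← (Representation.isProj_averageMap R).trace]
  simp only [Representation.averageMap, GroupAlgebra.average, _root_.map_smul, map_sum]
  simp [mul_comm]

lemma invol (T : V →ₗ[ℂ] V) (hT : T * T = 1) :
    ∃ m : ℕ, LinearMap.trace ℂ V T = 2 * m - finrank ℂ V ∧ m ≤ finrank ℂ V ∧
      (m = 0 → T = -1) ∧ (m = finrank ℂ V → T = 1) := by
  let p : V →ₗ[ℂ] V := (1 / 2 : ℂ) • (1 + T)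
  have hTp : T = (2 : ℂ) • p - 1 := by
    simp [p, smul_smul]
  have hp : IsIdempotentElem p := by
    unfold IsIdempotentElem
    simp only [p, smul_mul_smul_comm, mul_add, add_mul, hT, one_mul, mul_one]
    module
  have hproj := LinearMap.IsIdempotentElem.isProj_range p hp
  refine ⟨finrank ℂ (LinearMap.range p), ?_, Submodule.finrank_le _, ?_, ?_⟩
  · conv_lhs => rw [hTp]
    rw [map_sub, _root_.map_smul, hproj.trace, LinearMap.trace_one]
    simp
  · intro h
    rw [Submodule.finrank_eq_zero, LinearMap.range_eq_bot] at h
    rw [hTp, h]; simp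
  · intro h
    have h1 := Submodule.eq_top_of_finrank_eq h
    have : p = 1 := by
      ext v
      exact hproj.map_id v (by rw [h1]; trivial)
    rw [hTp, this]
    module

lemma arith (q a m : ℕ) (hq : 2 ≤ q) (hm : m ≤ q) (h : q * a + (q - 1) * q = q + (q - 1) * (2 * m)) :
    m = 0 ∨ m = q ∨ a = 1 := by
  obtain ⟨r, rfl⟩ : ∃ r, q = r + 1 := ⟨q - 1, by omega⟩
  simp only [Nat.add_sub_cancel] at h
  have h1 : (r + 1) ∣ r * (2 * m) := by
    have : (r + 1) ∣ (r + 1) + r * (2 * m) := by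
      rw [← h]; exact Dvd.intro (a + r) (by ring)
    exact (Nat.dvd_add_right (dvd_refl _)).1 this
  have h2 : (r + 1) ∣ 2 * m := (Nat.Coprime.dvd_mul_left (by simp)).1 h1
  obtain ⟨j, hj⟩ := h2
  have hj2 : j ≤ 2 := by
    by_contra hc
    have : (r + 1) * 3 ≤ (r + 1) * j := Nat.mul_le_mul_left _ (by omega)
    omega
  interval_cases j
  · left; omega
  · right; right
    rw [hj] at h
    have : (r + 1) * a = (r + 1) * 1 := by linarith
    exact Nat.eq_of_mul_eq_mul_left (by omega) this
  · right; left; omega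

variable {F : Type} [Field F]

lemma scalar_case (R : Representation ℂ (GL (Fin 2) F) V) (hR : Irr R) (h2 : (2 : F) = 0)
    (hs : ∀ x : F, ∃ c : ℂ, R (up x) = c • 1) : finrank ℂ V ≤ 1 := by
  have hsw : ∃ c : ℂ, R (sw F) = c • 1 := by
    obtain ⟨c, hc⟩ := hs 1
    refine ⟨c * c * c, ?_⟩
    rw [← sw_up_sw_up h2]
    simp only [map_mul, hc]
    have : R (sw F) * R (sw F) = 1 := by rw [← map_mul, sw_sq, map_one]
    simp [this, smul_smul, mul_assoc]
  have hsc : ∀ g h : GL (Fin 2) F, (∃ c : ℂ, R g = c • 1) → Commute (R g) (R h) := by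
    rintro g h ⟨c, hc⟩
    rw [hc]
    exact (Commute.one_left _).smul_left c
  have hcomm : ∀ g h : GL (Fin 2) F, Commute (R g) (R h) := by
    intro g
    induction g using gl_induction with
    | hu x => exact fun h => hsc _ _ (hs x)
    | hw => exact fun h => hsc _ _ hsw
    | hm g g' ih ih' => intro h; rw [map_mul]; exact (ih h).mul_left (ih' h)
    | hd a d =>
      intro h
      induction h using gl_induction with
      | hu x => exact (hsc _ _ (hs x)).symm
      | hw => exact (hsc _ _ hsw).symm
      | hm g g' ih ih' => rw [map_mul]; exact ih.mul_right ih'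
      | hd a' d' =>
        unfold Commute SemiconjBy
        rw [← map_mul, ← map_mul, dg_mul, dg_mul, mul_comm a, mul_comm d]
  by_contra hV
  push Not at hV
  have : Nontrivial V := Module.nontrivial_of_finrank_pos (R := ℂ) (by omega)
  have hscal : ∀ g, ∃ c : ℂ, ∀ v, R g v = c • v := by
    intro g
    obtain ⟨c, hc⟩ := Module.End.exists_eigenvalue (R g)
    refine ⟨c, fun v => ?_⟩
    rcases hR (Module.End.eigenspace (R g) c) (by
      intro h v hv
      rw [Module.End.mem_eigenspace_iff] at hv ⊢
      rw [← Module.End.mul_apply, (hcomm g h).eq, Module.End.mul_apply, hv, _root_.map_smul]) with h | h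
    · exact absurd h hc
    · have : v ∈ Module.End.eigenspace (R g) c := by rw [h]; trivial
      rwa [Module.End.mem_eigenspace_iff] at this
  obtain ⟨v, hv⟩ := exists_ne (0 : V)
  rcases hR (ℂ ∙ v) (by
    intro g x hx
    obtain ⟨c, hc⟩ := hscal g
    rw [hc]
    exact Submodule.smul_mem _ _ hx) with h | h
  · rw [Submodule.span_singleton_eq_bot] at h
    exact hv h
  · have := finrank_span_singleton (K := ℂ) hv
    rw [h, finrank_top] at this
    omega

/-- restriction to the unipotent group -/
def resU (R : Representation ℂ (GL (Fin 2) F) V) : Representation ℂ (Multiplicative F) V where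
  toFun x := R (up x.toAdd)
  map_one' := by simp [up_zero]
  map_mul' x y := by simp [up_add]

variable [Fintype F]

lemma finrank_U (R : Representation ℂ (GL (Fin 2) F) V) (hR : Irr R) (h2 : (2 : F) = 0)
    (hd : finrank ℂ V = Fintype.card F) : finrank ℂ (resU R).invariants = 1 := by
  classical
  have hq : 2 ≤ Fintype.card F := Fintype.one_lt_card
  have hinv : ∀ x : F, R (up x) * R (up x) = 1 := by
    intro x
    rw [← map_mul, ← up_add, ← two_mul, h2, zero_mul, up_zero, map_one]
  have hconj : ∀ x : F, x ≠ 0 →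
      LinearMap.trace ℂ V (R (up x)) = LinearMap.trace ℂ V (R (up 1)) := by
    intro x hx
    have h := dg_up (Units.mk0 x hx) 1 1
    simp only [Units.val_mk0, mul_one, Units.val_one, inv_one] at h
    have h' : up x = dg (Units.mk0 x hx) 1 * (up 1 * (dg (Units.mk0 x hx) 1)⁻¹) := by
      rw [← mul_assoc, h]; group
    rw [h', map_mul, LinearMap.trace_mul_comm, ← map_mul]
    congr 2; group
  obtain ⟨m, hm, hmle, -, -⟩ := invol _ (hinv 1)
  have key := inv_trace (resU R)
  have e1 : ∑ s : Multiplicative F, LinearMap.trace ℂ V (resU R s) =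
      ∑ x : F, LinearMap.trace ℂ V (R (up x)) :=
    Fintype.sum_equiv Multiplicative.toAdd _ _ (fun _ => rfl)
  rw [e1, ← Finset.add_sum_erase _ _ (Finset.mem_univ (0 : F)),
    Finset.sum_congr rfl (fun x hx => hconj x (Finset.ne_of_mem_erase hx)), hm, up_zero, map_one,
    LinearMap.trace_one, Finset.sum_const, Finset.card_erase_of_mem (Finset.mem_univ _),
    Finset.card_univ, hd, Fintype.card_multiplicative, nsmul_eq_mul] at key
  rw [hd] at hmle
  have key2 : Fintype.card F * finrank ℂ (resU R).invariants +
      (Fintype.card F - 1) * Fintype.card F =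
      Fintype.card F + (Fintype.card F - 1) * (2 * m) := by
    have : ((Fintype.card F * finrank ℂ (resU R).invariants +
      (Fintype.card F - 1) * Fintype.card F : ℕ) : ℂ) =
      ((Fintype.card F + (Fintype.card F - 1) * (2 * m) : ℕ) : ℂ) := by
      push_cast
      linear_combination key
    exact_mod_cast this
  have scal : (∃ c : ℂ, ∀ x : F, x ≠ 0 → R (up x) = c • 1) → False := by
    rintro ⟨c, hc⟩
    have := scalar_case R hR h2 (fun x => by
      by_cases hx : x = 0
      · exact ⟨1, by rw [hx, up_zero, map_one, one_smul]⟩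
      · exact ⟨c, hc x hx⟩)
    omega
  have same : ∀ x : F, x ≠ 0 → (m = 0 → R (up x) = -1) ∧
      (m = Fintype.card F → R (up x) = 1) := by
    intro x hx
    obtain ⟨m', hm', -, h0, h1⟩ := invol _ (hinv x)
    rw [hconj x hx, hm] at hm'
    have : m = m' := by
      have : (m : ℂ) = m' := by linear_combination hm' / 2
      exact_mod_cast this
    subst this
    rw [hd] at h1
    exact ⟨h0, h1⟩
  rcases arith _ _ m hq hmle key2 with h | h | h
  · exact (scal ⟨-1, fun x hx => by rw [(same x hx).1 h]; simp⟩).elim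
  · exact (scal ⟨1, fun x hx => by rw [(same x hx).2 h]; simp⟩).elim
  · exact h

lemma exists_eig (R : Representation ℂ (GL (Fin 2) F) V) (hR : Irr R) (h2 : (2 : F) = 0)
    (hd : finrank ℂ V = Fintype.card F) :
    ∃ (l : Fˣ →* ℂˣ) (v : V), v ≠ 0 ∧ ∀ b : GL (Fin 2) F, b 1 0 = 0 →
      R b v = ((l (Matrix.GeneralLinearGroup.det b) : ℂˣ) : ℂ) • v := by
  classical
  have hq : 2 ≤ Fintype.card F := Fintype.one_lt_card
  obtain ⟨⟨v, hvI⟩, hv0, hv1⟩ := finrank_eq_one_iff'.1 (finrank_U R hR h2 hd)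
  have hv : v ≠ 0 := fun h => hv0 (Subtype.ext h)
  have hone : ∀ z : V, (∀ x : F, R (up x) z = z) → ∃ c : ℂ, z = c • v := by
    intro z hz
    obtain ⟨c, hc⟩ := hv1 ⟨z, fun x => hz _⟩
    exact ⟨c, (congrArg Subtype.val hc).symm⟩
  have hvU : ∀ x : F, R (up x) v = v := fun x => hvI (Multiplicative.ofAdd x)
  have hT : ∀ a d : Fˣ, ∃ c : ℂ, R (dg a d) v = c • v := by
    intro a d
    apply hone
    intro x
    have h := dg_up a d ((a : F)⁻¹ * x * d)
    have : (a : F) * ((a : F)⁻¹ * x * d) * (d : F)⁻¹ = x := by field_simp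
    rw [this] at h
    rw [← Module.End.mul_apply, ← map_mul, ← h, map_mul, Module.End.mul_apply, hvU]
  choose mu hmu using hT
  have mu_mul : ∀ a d a' d', mu (a * a') (d * d') = mu a d * mu a' d' := by
    intro a d a' d'
    have : mu (a * a') (d * d') • v = (mu a d * mu a' d') • v := by
      rw [← hmu, ← dg_mul, map_mul, Module.End.mul_apply, hmu, _root_.map_smul, hmu, smul_smul,
        mul_comm]
    exact smul_left_injective ℂ hv this
  have mu_one : mu 1 1 = 1 := by
    have : mu 1 1 • v = (1 : ℂ) • v := by
      rw [← hmu]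
      have : dg (1 : Fˣ) 1 = 1 := by
        apply Units.ext
        simp [dg_coe, Matrix.one_fin_two]
      rw [this]; simp
    exact smul_left_injective ℂ hv this
  have hB : ∀ b : GL (Fin 2) F, b 1 0 = 0 → ∃ c : ℂ, R b v = c • v := by
    intro b hb
    obtain ⟨x, a, d, rfl⟩ := borel_form b hb
    refine ⟨mu a d, ?_⟩
    rw [map_mul, Module.End.mul_apply, hmu, _root_.map_smul, hvU]
  -- the relation
  obtain ⟨c, hc⟩ := hone (∑ x : F, R (up x) (R (sw F) v)) (by
    intro y
    rw [map_sum]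
    rw [← Equiv.sum_comp (Equiv.addLeft y) (fun x => R (up x) (R (sw F) v))]
    refine Finset.sum_congr rfl fun x _ => ?_
    rw [← Module.End.mul_apply, ← map_mul, ← up_add]; rfl)
  have hc0 : c ≠ 0 := by
    intro hc0
    rw [hc0, zero_smul] at hc
    let ws : {x : F // x ≠ 0} → V := fun x => R (up x.1) (R (sw F) v)
    let W : Submodule ℂ V := Submodule.span ℂ (Set.range ws)
    have hx : ∀ x : F, x ≠ 0 → R (up x) (R (sw F) v) ∈ W := fun x hx =>
      Submodule.subset_span ⟨⟨x, hx⟩, rfl⟩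
    have hall : ∀ x : F, R (up x) (R (sw F) v) ∈ W := by
      intro x
      by_cases h : x = 0
      · subst h
        rw [← Finset.add_sum_erase _ _ (Finset.mem_univ (0 : F))] at hc
        rw [eq_neg_of_add_eq_zero_left hc]
        exact W.neg_mem (W.sum_mem fun x h => hx x (Finset.ne_of_mem_erase h))
      · exact hx x h
    have hvW : v ∈ W := by
      have h1 := congrArg (R (sw F)) hc
      rw [map_zero, map_sum, ← Finset.add_sum_erase _ _ (Finset.mem_univ (0 : F)), up_zero,
        map_one, Module.End.one_apply, ← Module.End.mul_apply, ← map_mul, sw_sq, map_one,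
        Module.End.one_apply] at h1
      rw [eq_neg_of_add_eq_zero_left h1]
      refine W.neg_mem (W.sum_mem fun x h => ?_)
      have hx0 := Finset.ne_of_mem_erase h
      have h3 := sw_up_sw (Units.mk0 x hx0)
      rw [Units.val_mk0] at h3
      rw [← Module.End.mul_apply, ← Module.End.mul_apply, ← map_mul, ← map_mul, mul_assoc, h3]
      simp only [map_mul, Module.End.mul_apply, hmu, _root_.map_smul, hvU]
      exact W.smul_mem _ (hall _)
    have hWg : ∀ g, R g v ∈ W := by
      intro g
      by_cases h : g 1 0 = 0
      · obtain ⟨c, hc⟩ := hB g h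
        rw [hc]; exact W.smul_mem _ hvW
      · obtain ⟨b, hb, hg⟩ := bruhat g h
        obtain ⟨c, hc⟩ := hB b hb
        rw [hg, map_mul, map_mul, Module.End.mul_apply, Module.End.mul_apply, hc, _root_.map_smul,
          _root_.map_smul]
        exact W.smul_mem _ (hall _)
    have hle : Submodule.span ℂ (Set.range fun g => R g v) ≤ W := by
      rw [Submodule.span_le]
      rintro _ ⟨g, rfl⟩
      exact hWg g
    have htop : W = ⊤ := by
      rcases hR (Submodule.span ℂ (Set.range fun g => R g v)) (by
        intro g z hz
        induction hz using Submodule.span_induction with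
        | mem x hx =>
          obtain ⟨h, rfl⟩ := hx
          refine Submodule.subset_span ⟨g * h, ?_⟩
          simp
        | zero => simp
        | add x y _ _ hx hy => rw [map_add]; exact Submodule.add_mem _ hx hy
        | smul a x _ hx => rw [_root_.map_smul]; exact Submodule.smul_mem _ _ hx) with h | h
      · exfalso
        apply hv
        rw [← Submodule.mem_bot ℂ, ← h]
        exact Submodule.subset_span ⟨1, by simp⟩
      · rw [eq_top_iff, ← h]; exact hle
    have h5 : finrank ℂ W ≤ Fintype.card {x : F // x ≠ 0} := finrank_range_le_card ws
    rw [htop, finrank_top, hd] at h5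
    have : Fintype.card {x : F // x ≠ 0} < Fintype.card F :=
      Fintype.card_subtype_lt (x := 0) (by simp)
    omega
  have mu_symm : ∀ a d, mu a d = mu d a := by
    intro a d
    have h1 := congrArg (R (dg a d)) hc
    rw [map_sum, _root_.map_smul, hmu] at h1
    have h2 : ∀ x : F, R (dg a d) (R (up x) (R (sw F) v)) =
        mu d a • R (up (a * x * (d : F)⁻¹)) (R (sw F) v) := by
      intro x
      rw [← Module.End.mul_apply, ← map_mul, dg_up, map_mul, Module.End.mul_apply,
        ← Module.End.mul_apply (R (dg a d)), ← map_mul, dg_sw, map_mul, Module.End.mul_apply,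
        hmu, _root_.map_smul, _root_.map_smul]
    simp only [h2] at h1
    rw [← Finset.smul_sum] at h1
    have h3 : ∑ x : F, R (up (a * x * (d : F)⁻¹)) (R (sw F) v) =
        ∑ x : F, R (up x) (R (sw F) v) :=
      Fintype.sum_equiv ((Units.mulLeft a).trans (Units.mulRight d⁻¹)) _ _ (fun x => by simp)
    rw [h3, hc, smul_smul, smul_smul] at h1
    have h4 := smul_left_injective ℂ hv h1
    change mu d a * c = c * mu a d at h4
    rw [mul_comm] at h4
    exact (mul_left_cancel₀ hc0 h4).symm
  have mu_eq : ∀ a d, mu a d = mu (a * d) 1 := by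
    intro a d
    have h1 := mu_mul a 1 1 d
    have h2 := mu_mul a 1 d 1
    simp only [one_mul, mul_one] at h1 h2
    rw [h1, h2, mu_symm 1 d]
  let l0 : Fˣ →* ℂ :=
    { toFun := fun a => mu a 1
      map_one' := mu_one
      map_mul' := fun a b => by simpa using mu_mul a 1 b 1 }
  refine ⟨l0.toHomUnits, v, hv, ?_⟩
  intro b hb
  obtain ⟨x, a, d, rfl⟩ := borel_form b hb
  rw [map_mul, Module.End.mul_apply, hmu, _root_.map_smul, hvU, map_mul, dg_det, up_det, one_mul,
    MonoidHom.coe_toHomUnits, mu_eq]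
  rfl

end StAux

namespace StAux

open OnePoint Module Paper

variable {V : Type} [AddCommGroup V] [Module ℂ V] [Module.Finite ℂ V]

lemma Irr.invariants_eq_bot {G : Type} [Group G] {R : Representation ℂ G V} (hR : Irr R)
    (hd : 2 ≤ finrank ℂ V) : R.invariants = ⊥ := by
  rcases hR R.invariants (fun g v hv => by rw [hv g]; exact hv) with h | h
  · exact h
  · exfalso
    have : Nontrivial V := Module.nontrivial_of_finrank_pos (R := ℂ) (by omega)
    obtain ⟨v, hv⟩ := exists_ne (0 : V)
    have hfix : ∀ g z, R g z = z := fun g z => by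
      have : z ∈ R.invariants := by rw [h]; trivial
      exact this g
    rcases hR (ℂ ∙ v) (fun g x hx => by rwa [hfix]) with h' | h'
    · rw [Submodule.span_singleton_eq_bot] at h'
      exact hv h'
    · have := finrank_span_singleton (K := ℂ) hv
      rw [h', finrank_top] at this
      omega

/-- linear representation attached to a matrix representation -/
def toR {G : Type} [Group G] {n : ℕ} (ρ : G →* GL (Fin n) ℂ) :
    Representation ℂ G (Fin n → ℂ) where
  toFun g := Matrix.toLin' (ρ g : Matrix (Fin n) (Fin n) ℂ)
  map_one' := by simp; rfl
  map_mul' g h := by simp [Matrix.toLin'_mul]; rfl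

lemma toR_apply {G : Type} [Group G] {n : ℕ} (ρ : G →* GL (Fin n) ℂ) (g : G) (v : Fin n → ℂ) :
    toR ρ g v = (ρ g : Matrix (Fin n) (Fin n) ℂ).mulVec v := rfl

lemma toR_trace {G : Type} [Group G] {n : ℕ} (ρ : G →* GL (Fin n) ℂ) (g : G) :
    LinearMap.trace ℂ _ (toR ρ g) = charOf ρ g := Matrix.trace_toLin'_eq _

lemma toR_irr {G : Type} [Group G] {n : ℕ} {ρ : G →* GL (Fin n) ℂ} (h : IsIrredRep ρ) :
    Irr (toR ρ) := h.2

lemma exists_matRep {G : Type} [Group G] (R : Representation ℂ G V) (hR : Irr R)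
    (hpos : 0 < finrank ℂ V) :
    ∃ ρ : G →* GL (Fin (finrank ℂ V)) ℂ, IsIrredRep ρ ∧
      ∀ g, charOf ρ g = LinearMap.trace ℂ V (R g) := by
  let b := Module.finBasis ℂ V
  let ρ0 : G →* Matrix (Fin (finrank ℂ V)) (Fin (finrank ℂ V)) ℂ :=
    ((LinearMap.toMatrixAlgEquiv b).toRingEquiv.toMonoidHom).comp R
  have hρ0 : ∀ g, ρ0 g = LinearMap.toMatrix b b (R g) := fun g => rfl
  refine ⟨ρ0.toHomUnits, ⟨hpos, ?_⟩, ?_⟩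
  · intro W hW
    have hact : ∀ g v, (ρ0 g).mulVec (b.equivFun v) = b.equivFun (R g v) := by
      intro g v
      rw [hρ0]
      exact LinearMap.toMatrix_mulVec_repr b b (R g) v
    have := hR (W.comap b.equivFun.toLinearMap) (by
      intro g v hv
      have h1 := hW g _ hv
      rw [MonoidHom.coe_toHomUnits] at h1
      have h2 := hact g v
      change b.equivFun (R g v) ∈ W
      rw [← h2]
      exact h1)
    rcases this with h | h
    · left
      rw [eq_bot_iff]
      intro x hx
      have h3 : b.equivFun.symm x ∈ W.comap b.equivFun.toLinearMap := by
        change b.equivFun (b.equivFun.symm x) ∈ W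
        rwa [LinearEquiv.apply_symm_apply]
      rw [h, Submodule.mem_bot] at h3
      rw [LinearEquiv.map_eq_zero_iff] at h3
      rw [h3]
      exact Submodule.zero_mem _
    · right
      rw [eq_top_iff]
      intro x _
      have h3 : b.equivFun.symm x ∈ W.comap b.equivFun.toLinearMap := by rw [h]; trivial
      change b.equivFun (b.equivFun.symm x) ∈ W at h3
      rwa [LinearEquiv.apply_symm_apply] at h3
  · intro g
    rw [LinearMap.trace_eq_matrix_trace ℂ b]
    rfl

variable {F : Type} [Field F]

lemma tw_trace (l : Fˣ →* ℂˣ) (R : Representation ℂ (GL (Fin 2) F) V) (g : GL (Fin 2) F) :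
    LinearMap.trace ℂ V (tw l R g) =
      ((l (Matrix.GeneralLinearGroup.det g) : ℂˣ) : ℂ) * LinearMap.trace ℂ V (R g) := by
  change LinearMap.trace ℂ V ((((l (Matrix.GeneralLinearGroup.det g) : ℂˣ) : ℂ)) • R g) = _
  rw [_root_.map_smul, smul_eq_mul]

variable [Fintype F] [DecidableEq F]

lemma sum_fixed (R : Representation ℂ (GL (Fin 2) F) V) (w : OnePoint F → V)
    (hw : ∀ g p, R g (w p) = w (g • p)) (hI : R.invariants = ⊥) : ∑ p, w p = 0 := by
  rw [← Submodule.mem_bot ℂ, ← hI]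
  intro g
  rw [map_sum]
  simp only [hw]
  exact Equiv.sum_comp (MulAction.toPerm g) w

/-- The twisted Steinberg characters. -/
def stChar (l : Fˣ →* ℂˣ) : GL (Fin 2) F → ℂ := fun g =>
  ((l (Matrix.GeneralLinearGroup.det g) : ℂˣ) : ℂ) * (stM g).trace

lemma classify (h2 : (2 : F) = 0) (ρ : GL (Fin 2) F →* GL (Fin (Fintype.card F)) ℂ)
    (hρ : IsIrredRep ρ) : ∃ l : Fˣ →* ℂˣ, charOf ρ = stChar l ∧
      (tw l⁻¹ (toR ρ)).invariants = ⊥ ∧ ∃ v ≠ 0, ∀ b : GL (Fin 2) F, b 1 0 = 0 →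
        tw l⁻¹ (toR ρ) b v = v := by
  have hq : 2 ≤ Fintype.card F := Fintype.one_lt_card
  obtain ⟨l, v, hv, hb⟩ := exists_eig (toR ρ) (toR_irr hρ) h2 (by simp)
  have hI := ((toR_irr hρ).tw l⁻¹).invariants_eq_bot (by simpa using hq)
  have hfix : ∀ b : GL (Fin 2) F, b 1 0 = 0 → tw l⁻¹ (toR ρ) b v = v := by
    intro b h
    rw [tw_apply, hb b h, smul_smul]
    simp
  refine ⟨l, ?_, hI, v, hv, hfix⟩
  have hw := orbit_w _ v hfix
  ext g
  have ht := trace_eq_stM _ (fun p => tw l⁻¹ (toR ρ) (rp p) v) hw (sum_fixed _ _ hw hI) (by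
    simpa [rp] using hv) (by simp) g
  rw [tw_trace, toR_trace] at ht
  rw [stChar, ← ht]
  simp

lemma stChar_irr (l : Fˣ →* ℂˣ) : IsIrrChar (stChar l) := by
  obtain ⟨ρ, h, hc⟩ := exists_matRep (tw l (stR F)) (stR_irr.tw l) (by
    simp [Fintype.card_pos])
  refine ⟨_, ρ, h, ?_⟩
  ext g
  rw [hc, tw_trace]
  change _ = _ * LinearMap.trace ℂ _ (Matrix.toLin' (stM g))
  rw [Matrix.trace_toLin'_eq]
  rfl

lemma stChar_scalar (l : Fˣ →* ℂˣ) (a : Fˣ) :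
    stChar l (dg a a) = ((l (a * a) : ℂˣ) : ℂ) * Fintype.card F := by
  rw [stChar, stM_scalar, dg_det, Matrix.trace_one]

lemma stChar_one (l : Fˣ →* ℂˣ) : stChar l (1 : GL (Fin 2) F) = Fintype.card F := by
  rw [stChar, stM_one, Matrix.trace_one]
  simp

lemma unit_sq (h2 : (2 : F) = 0) (a : Fˣ) : ∃ s : Fˣ, a = s * s := by
  have : CharP F 2 := CharTwo.of_one_ne_zero_of_two_eq_zero one_ne_zero h2
  obtain ⟨s, hs⟩ := FiniteField.isSquare_of_char_two (ringChar.eq F 2) (a : F)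
  have hs0 : s ≠ 0 := by rintro rfl; simp at hs
  exact ⟨Units.mk0 s hs0, Units.ext hs⟩

lemma stChar_inj (h2 : (2 : F) = 0) : Function.Injective (stChar (F := F)) := by
  intro l l' h
  ext a
  obtain ⟨s, rfl⟩ := unit_sq h2 a
  have := congrFun h (dg s s)
  rw [stChar_scalar, stChar_scalar] at this
  exact mul_right_cancel₀ (by simp) this

lemma char_deg {ψ : GL (Fin 2) F → ℂ} {n : ℕ} {ρ : GL (Fin 2) F →* GL (Fin n) ℂ}
    (h : ψ = charOf ρ) (h1 : ψ 1 = (Fintype.card F : ℂ)) : n = Fintype.card F := by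
  rw [h] at h1
  simp [charOf] at h1
  exact_mod_cast h1

lemma the_count (h2 : (2 : F) = 0) :
    {ψ : GL (Fin 2) F → ℂ | IsIrrChar ψ ∧ ψ 1 = (Fintype.card F : ℂ)}.ncard =
      Fintype.card F - 1 := by
  have : {ψ : GL (Fin 2) F → ℂ | IsIrrChar ψ ∧ ψ 1 = (Fintype.card F : ℂ)} =
      Set.range (stChar (F := F)) := by
    ext ψ
    constructor
    · rintro ⟨⟨n, ρ, hρ, hψ⟩, h1⟩
      have hn := char_deg hψ h1
      subst hn
      obtain ⟨l, hl, -⟩ := classify h2 ρ hρ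
      exact ⟨l, by rw [hψ, hl]⟩
    · rintro ⟨l, rfl⟩
      exact ⟨stChar_irr l, stChar_one l⟩
  rw [this, Set.ncard_range_of_injective (stChar_inj h2),
    CommGroup.card_monoidHom_of_hasEnoughRootsOfUnity, Nat.card_eq_fintype_card,
    Fintype.card_units]

end StAux

namespace StAux

open OnePoint Module Paper

lemma det_gram (n : ℕ) (b : ℂ) (m : ℕ) (hn : n = 2 * (m + 1)) :
    (Matrix.of fun i j : Fin n => if i = j then -(n : ℂ) * b else b).det =
      b ^ n * ((n : ℂ) + 1) ^ (2 * m + 1) := by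
  have hne : (n : ℂ) + 1 ≠ 0 := Nat.cast_add_one_ne_zero _
  have h1 : (Matrix.of fun i j : Fin n => if i = j then -(n : ℂ) * b else b) =
      (-(b * ((n : ℂ) + 1))) • (1 + Matrix.replicateCol Unit (fun _ : Fin n => -((n : ℂ) + 1)⁻¹) *
        Matrix.replicateRow Unit (fun _ : Fin n => (1 : ℂ))) := by
    ext i j
    simp only [Matrix.of_apply, Matrix.smul_apply, Matrix.add_apply, Matrix.one_apply,
      Matrix.mul_apply, Matrix.replicateCol_apply, Matrix.replicateRow_apply, smul_eq_mul]
    split_ifs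
    · simp; field_simp; ring
    · simp; field_simp
  have hev : Even n := ⟨m + 1, by omega⟩
  have h3 : (1 : ℂ) + (fun _ : Fin n => (1 : ℂ)) ⬝ᵥ (fun _ : Fin n => -((n : ℂ) + 1)⁻¹) =
      ((n : ℂ) + 1)⁻¹ := by
    simp [dotProduct]; field_simp; ring
  rw [h1, Matrix.det_smul, Matrix.det_one_add_replicateCol_mul_replicateRow, h3, Fintype.card_fin,
    hev.neg_pow, mul_pow]
  have h4 : ((n : ℂ) + 1) ^ n = ((n : ℂ) + 1) ^ (2 * m + 1) * ((n : ℂ) + 1) := by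
    rw [← pow_succ]; congr 1
  rw [h4]
  field_simp

lemma det_mem (L : Subfield ℂ) {n : ℕ} (P : Matrix (Fin n) (Fin n) ℂ) (h : ∀ i j, P i j ∈ L) :
    P.det ∈ L := by
  rw [Matrix.det_apply]
  refine L.sum_mem fun s _ => ?_
  rw [Units.smul_def]
  exact zsmul_mem (L.prod_mem fun i _ => h _ _) _

variable {F : Type} [Field F] [Fintype F]

lemma norm_l (l : Fˣ →* ℂˣ) (a : Fˣ) :
    (starRingEnd ℂ) ((l a : ℂˣ) : ℂ) * ((l a : ℂˣ) : ℂ) = 1 := by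
  classical
  have h : ((l a : ℂˣ) : ℂ) ^ (Fintype.card Fˣ) = 1 := by
    rw [← Units.val_pow_eq_pow_val, ← map_pow, pow_card_eq_one]; simp
  have h1 := Complex.norm_eq_one_of_pow_eq_one h Fintype.card_ne_zero
  rw [← Complex.normSq_eq_conj_mul_self, Complex.normSq_eq_norm_sq, h1]
  simp

variable [DecidableEq F]

lemma the_disc (h2 : (2 : F) = 0) (ψ : GL (Fin 2) F → ℂ) (hψ : IsIrrChar ψ)
    (h1 : ψ 1 = (Fintype.card F : ℂ)) (m : ℕ) (hm : Fintype.card F = 2 * (m + 1)) :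
    HasUnitaryDisc ψ ((-1 : ℂ) ^ (Fintype.card F / 2) * ((Fintype.card F : ℂ) + 1)) := by
  obtain ⟨n1, ρ1, hρ1, hψ1⟩ := hψ
  obtain rfl := char_deg hψ1 h1
  obtain ⟨l, hl, hI1, v1, hv1, hB1⟩ := classify h2 ρ1 hρ1
  intro n ρ hψρ hρL H hHL hHu hHh hHinv
  obtain rfl := char_deg hψρ h1
  set L := charField ψ with hLdef
  have hq0 : (Fintype.card F : ℂ) ≠ 0 := by simp
  -- values of `l` lie in `L`
  have hlL : ∀ a : Fˣ, ((l a : ℂˣ) : ℂ) ∈ L := by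
    intro a
    obtain ⟨s, rfl⟩ := unit_sq h2 a
    have h3 : ψ (dg s s) ∈ L := Subfield.subset_closure ⟨_, rfl⟩
    rw [hψ1, hl, stChar_scalar] at h3
    have h4 := L.div_mem h3 (natCast_mem L (Fintype.card F))
    rwa [mul_div_cancel_right₀ _ hq0] at h4
  -- `L` is stable under complex conjugation
  have hLc : ∀ x ∈ L, (starRingEnd ℂ) x ∈ L := by
    have hle : L ≤ L.comap (starRingEnd ℂ) := by
      rw [hLdef]
      unfold charField
      rw [Subfield.closure_le]
      rintro _ ⟨g, rfl⟩
      change (starRingEnd ℂ) (ψ g) ∈ L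
      have h3 : ψ g ∈ L := Subfield.subset_closure ⟨_, rfl⟩
      have h4 : ψ g = ((l (Matrix.GeneralLinearGroup.det g) : ℂˣ) : ℂ) * (stM g).trace := by
        rw [hψ1, hl]; rfl
      have h5 : (starRingEnd ℂ) (stM g).trace = (stM g).trace := by
        simp only [Matrix.trace, Matrix.diag, stM, map_sum, map_sub]
        refine Finset.sum_congr rfl fun x _ => ?_
        split_ifs <;> simp
      have h6 : (starRingEnd ℂ) (ψ g) = ((l (Matrix.GeneralLinearGroup.det g) : ℂˣ) : ℂ)⁻¹ *
          (((l (Matrix.GeneralLinearGroup.det g) : ℂˣ) : ℂ)⁻¹ * ψ g) := by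
        rw [h4, map_mul, h5, inv_mul_cancel_left₀ (Units.ne_zero _),
          eq_inv_of_mul_eq_one_left (norm_l l _)]
      rw [h6]
      exact L.mul_mem (L.inv_mem (hlL _)) (L.mul_mem (L.inv_mem (hlL _)) h3)
    exact fun x hx => hle hx
  set R := tw l⁻¹ (toR ρ) with hR
  set R1 := tw l⁻¹ (toR ρ1) with hR1
  have htr : ∀ g, LinearMap.trace ℂ _ (R g) = LinearMap.trace ℂ _ (R1 g) := by
    intro g
    rw [hR, hR1, tw_trace, tw_trace, toR_trace, toR_trace, ← hψρ, ← hψ1]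
  have hI : R.invariants = ⊥ := by
    have e1 := inv_trace R
    have e2 := inv_trace R1
    simp only [htr] at e1
    rw [← e2, hI1, finrank_bot] at e1
    simp at e1
    exact e1
  have hRapp : ∀ g v, R g v = (((l (Matrix.GeneralLinearGroup.det g))⁻¹ : ℂˣ) : ℂ) •
    (ρ g : Matrix _ _ ℂ).mulVec v := fun g v => rfl
  have hRL : ∀ g v, (∀ i, v i ∈ L) → ∀ i, R g v i ∈ L := by
    intro g v hv i
    rw [hRapp, Pi.smul_apply, smul_eq_mul, Units.val_inv_eq_inv_val]
    refine L.mul_mem (L.inv_mem (hlL _)) ?_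
    change ∑ j, (ρ g : Matrix _ _ ℂ) i j * v j ∈ L
    exact (L.sum_mem fun j _ => L.mul_mem (hρL _ _ _) (hv j))
  -- a rational Borel-fixed vector
  let B := MulAction.stabilizer (GL (Fin 2) F) (∞ : OnePoint F)
  obtain ⟨v, hv0, hvB, hvL⟩ : ∃ v : Fin (Fintype.card F) → ℂ, v ≠ 0 ∧
      (∀ b : GL (Fin 2) F, b 1 0 = 0 → R b v = v) ∧ ∀ i, v i ∈ L := by
    have hsum : ∑ b : B, R b ≠ 0 := by
      intro h0
      have e1 : ∑ b : B, LinearMap.trace ℂ _ (R b) = 0 := by rw [← map_sum, h0, map_zero]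
      have e2 := inv_trace (R1.comp B.subtype)
      simp only [MonoidHom.comp_apply, Subgroup.subtype_apply] at e2
      simp only [htr] at e1
      rw [e1] at e2
      have e3 : finrank ℂ (Representation.invariants (R1.comp B.subtype)) = 0 := by
        simpa using e2
      rw [Submodule.finrank_eq_zero] at e3
      apply hv1
      rw [← Submodule.mem_bot ℂ, ← e3]
      rintro ⟨b, hb⟩
      exact hB1 b (OnePoint.smul_infty_eq_self_iff.1 hb)
    have : ∃ j, (∑ b : B, R b) (Pi.single j 1) ≠ 0 := by
      by_contra hcon
      push Not at hcon
      apply hsum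
      apply (Pi.basisFun ℂ _).ext
      intro j
      simpa using hcon j
    obtain ⟨j, hj⟩ := this
    refine ⟨_, hj, ?_, ?_⟩
    · intro b hb
      have hbB : b ∈ B := OnePoint.smul_infty_eq_self_iff.2 hb
      rw [LinearMap.sum_apply, map_sum]
      rw [← Equiv.sum_comp (Equiv.mulLeft (⟨b, hbB⟩ : B))
        (fun x : B => R x (Pi.single j 1))]
      refine Finset.sum_congr rfl fun x _ => ?_
      simp
    · intro i
      rw [LinearMap.sum_apply, Finset.sum_apply]
      refine L.sum_mem fun b _ => hRL _ _ ?_ i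
      intro k
      rw [Pi.single_apply]
      split_ifs
      · exact L.one_mem
      · exact L.zero_mem
  let w : OnePoint F → (Fin (Fintype.card F) → ℂ) := fun p => R (rp p) v
  have hw : ∀ g p, R g (w p) = w (g • p) := orbit_w R v hvB
  have hs : ∑ p, w p = 0 := sum_fixed R w hw hI
  have hw0 : w ∞ ≠ 0 := by simpa [w, rp] using hv0
  have hwL : ∀ p i, w p i ∈ L := fun p i => hRL _ _ hvL i
  have hli := linInd_w R w hw hs hw0
  -- the Gram matrix
  let β : OnePoint F → OnePoint F → ℂ := fun x y => star (w x) ⬝ᵥ (H *ᵥ w y)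
  have hβinv : ∀ (g : GL (Fin 2) F) (x y : OnePoint F), β (g • x) (g • y) = β x y := by
    intro g x y
    simp only [β, ← hw, hRapp]
    rw [star_smul, Matrix.mulVec_smul, smul_dotProduct, dotProduct_smul, smul_smul,
      Matrix.star_mulVec, ← Matrix.dotProduct_mulVec, Matrix.mulVec_mulVec, Matrix.mulVec_mulVec,
      hHinv g]
    have := norm_l l⁻¹ (Matrix.GeneralLinearGroup.det g)
    change (starRingEnd ℂ) _ * _ = 1 at this
    rw [MonoidHom.inv_apply] at this
    change ((starRingEnd ℂ) _ * _) • _ = _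
    rw [this, one_smul]
  set b := β ∞ ((0 : F) : OnePoint F) with hb
  have hβ1 : ∀ x : F, β ∞ (x : OnePoint F) = b := by
    intro x
    rw [hb, ← hβinv (up x) ∞ ((0 : F) : OnePoint F), up_smul, up_smul_infty, zero_add]
  have hβ2 : ∀ x y, x ≠ y → β x y = b := by
    intro x y hxy
    have e := hβinv (rp x)⁻¹ x y
    rw [inv_smul_eq_iff.2 (rp_smul x).symm] at e
    rw [← e]
    have hne : (rp x)⁻¹ • y ≠ ∞ := by
      intro h
      rw [inv_smul_eq_iff, rp_smul] at h
      exact hxy h.symm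
    obtain ⟨t, ht⟩ := OnePoint.ne_infty_iff_exists.1 hne
    rw [← ht, hβ1]
  have hβ3 : ∀ x, β x x = -(Fintype.card F : ℂ) * b := by
    intro x
    have e := hβinv (rp x)⁻¹ x x
    rw [inv_smul_eq_iff.2 (rp_smul x).symm] at e
    rw [← e]
    have e2 : ∑ p, β ∞ p = 0 := by
      simp only [β]
      rw [← dotProduct_sum, ← Matrix.mulVec_sum, hs]
      simp
    rw [sum_onePoint] at e2
    simp only [hβ1] at e2
    rw [eq_neg_of_add_eq_zero_left e2]
    simp
  have hbconj : (starRingEnd ℂ) b = b := by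
    have e1 : (starRingEnd ℂ) b = β ((0 : F) : OnePoint F) ∞ := by
      rw [hb]
      change star (_ ⬝ᵥ _) = _
      rw [Matrix.star_dotProduct, Matrix.star_mulVec, hHh, star_star,
        ← Matrix.dotProduct_mulVec]
    rw [e1, hβ2 _ _ (OnePoint.coe_ne_infty _)]
  have hbL : b ∈ L := by
    rw [hb]
    change ∑ i, star (w ∞ i) * ∑ j, H i j * w ((0 : F) : OnePoint F) j ∈ L
    exact L.sum_mem fun i _ => L.mul_mem (hLc _ (hwL _ _))
      (L.sum_mem fun j _ => L.mul_mem (hHL _ _) (hwL _ _))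
  let e : Fin (Fintype.card F) ≃ F := (Fintype.equivFin F).symm
  let P : Matrix (Fin (Fintype.card F)) (Fin (Fintype.card F)) ℂ :=
    Matrix.of fun i j => w (e j : OnePoint F) i
  have hPL : P.det ∈ L := det_mem L P fun i j => hwL _ _
  have hP : IsUnit P.det := by
    rw [← Matrix.isUnit_iff_isUnit_det, ← Matrix.linearIndependent_cols_iff_isUnit]
    exact hli.comp e e.injective
  have hgram : Pᴴ * H * P = Matrix.of fun i j : Fin (Fintype.card F) =>
      if i = j then -(Fintype.card F : ℂ) * b else b := by
    ext i j
    have e1 : (Pᴴ * H * P) i j = β (e i) (e j) := by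
      rw [mul_assoc]
      rfl
    rw [e1, Matrix.of_apply]
    split_ifs with h
    · rw [h, hβ3]
    · rw [hβ2]
      intro h'
      rw [OnePoint.coe_eq_coe] at h'
      exact h (e.injective h')
  have hdet := congrArg Matrix.det hgram
  rw [det_gram _ b m hm, Matrix.det_mul, Matrix.det_mul, Matrix.det_conjTranspose] at hdet
  change (starRingEnd ℂ) P.det * H.det * P.det = _ at hdet
  have hP0 : P.det ≠ 0 := hP.ne_zero
  have hPc0 : (starRingEnd ℂ) P.det ≠ 0 := by simpa using hP0
  have hq1 : (Fintype.card F : ℂ) + 1 ≠ 0 := Nat.cast_add_one_ne_zero _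
  have hb0 : b ≠ 0 := by
    intro h
    rw [h, zero_pow Fintype.card_ne_zero, zero_mul] at hdet
    exact mul_ne_zero (mul_ne_zero hPc0 hHu.ne_zero) hP0 hdet
  refine ⟨b ^ (m + 1) * ((Fintype.card F : ℂ) + 1) ^ m / P.det, ?_, ?_, ?_⟩
  · exact L.div_mem (L.mul_mem (L.pow_mem hbL _)
      (L.pow_mem (L.add_mem (natCast_mem L _) L.one_mem) _)) hPL
  · exact div_ne_zero (mul_ne_zero (pow_ne_zero _ hb0) (pow_ne_zero _ hq1)) hP0
  · have hsign : (-1 : ℂ) ^ (Fintype.card F * (Fintype.card F - 1) / 2) =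
        (-1 : ℂ) ^ (Fintype.card F / 2) := by
      have a1 : Fintype.card F * (Fintype.card F - 1) / 2 = (2 * m + 1) * (m + 1) := by
        rw [hm, show 2 * (m + 1) - 1 = 2 * m + 1 by omega, mul_assoc,
          Nat.mul_div_cancel_left _ (by norm_num), mul_comm]
      have a2 : Fintype.card F / 2 = m + 1 := by omega
      rw [a1, a2, pow_mul, Odd.neg_one_pow ⟨m, rfl⟩]
    rw [hsign, mul_assoc]
    congr 1
    simp only [map_div₀, map_mul, map_pow, hbconj, map_add, map_natCast, map_one]
    have hH : H.det = b ^ Fintype.card F * ((Fintype.card F : ℂ) + 1) ^ (2 * m + 1) /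
        (P.det * (starRingEnd ℂ) P.det) := by
      rw [eq_div_iff (mul_ne_zero hP0 hPc0), ← hdet]
      ring
    have hbp : b ^ Fintype.card F = b ^ (m + 1) * b ^ (m + 1) := by
      rw [hm]; ring
    rw [hH, hbp]
    field_simp
    ring

end StAux

namespace Paper

/-- for `q` a power of 2, `GL₂(F_q)` has exactly `q-1` irreducible
complex characters of degree `q`, and each such character with non-real character
field has unitary discriminant `(-1)^(q/2)·(q+1)`. -/
theorem stmt1 (k : ℕ) (hk : 0 < k)
    (F : Type) [Field F] [Fintype F] (hF : Fintype.card F = 2 ^ k)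
    (q : ℕ) (hq : q = 2 ^ k) :
    {ψ : GL (Fin 2) F → ℂ | IsIrrChar ψ ∧ ψ 1 = (q : ℂ)}.ncard = q - 1 ∧
    ∀ ψ : GL (Fin 2) F → ℂ, IsIrrChar ψ → ψ 1 = (q : ℂ) → NotReal ψ →
      HasUnitaryDisc ψ ((-1 : ℂ) ^ (q / 2) * ((q : ℂ) + 1)) := by
  classical
  have hqF : q = Fintype.card F := by rw [hq, hF]
  have h2 : (2 : F) = 0 := by
    have h : ((Fintype.card F : ℕ) : F) = 0 := FiniteField.cast_card_eq_zero F
    rw [hF, Nat.cast_pow] at h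
    have h' := pow_eq_zero_iff (Nat.pos_iff_ne_zero.mp hk) |>.mp h
    exact_mod_cast h'
  obtain ⟨m, hm⟩ : ∃ m, Fintype.card F = 2 * (m + 1) := by
    obtain ⟨j, rfl⟩ : ∃ j, k = j + 1 := ⟨k - 1, by omega⟩
    have hp : 0 < 2 ^ j := by positivity
    exact ⟨2 ^ j - 1, by rw [hF, pow_succ]; omega⟩
  clear hq
  subst hqF
  exact ⟨StAux.the_count h2, fun ψ hψ h1 _ => StAux.the_disc h2 ψ hψ h1 m hm⟩

end Paper
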